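/- Let γ ∈ ℝ and let Z_1, Z_2, … be independent standard GP(γ) random variables. Let q ≥ 3 be fixed and let K be a location-scale invariant kernel, not everywhere constant, such that E[|K((Z_{q−j:q−1})_{j=1}^{q})|^p] < ∞ for all p > 0 (with Z_{0:q−1} := 0). For index sets S, S' of positive integers with |S| = |S'| = m and |S ∩ S'| = ℓ, let ζ_{m,ℓ} = cov(K_m(Z_S), K_m(Z_{S'})). Suppose m = m_n satisfies m = o(n^{1−ε}) and ln(n) = o(m^{1−δ}) as n → ∞ for some ε, δ > 0, and set k = n/m. Then the variance of the U-statistic U^m_{n,Z} = C(n,m)^{−1} Σ_{I ⊂ [n], |I| = m} K_m(Z_I) satisfies |var(U^m_{n,Z}) − (m/k) ζ_{m,1}| = o(1/k) as n → ∞. -/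

import Mathlib

open MeasureTheory ProbabilityTheory Filter Real Set Topology
open scoped ENNReal NNReal Classical

noncomputable section

/-- The `j`-th largest entry of the tuple `x` (`j = 0` gives the maximum, `j = 1` the
second largest, ...); `0` when `j` is out of range. -/
def descStat {m : ℕ} (x : Fin m → ℝ) (j : ℕ) : ℝ :=
  if h : j < m then (x ∘ Tuple.sort x) ⟨m - 1 - j, by omega⟩ else 0

/-- The kernel of degree `m` obtained from `K` by applying it to the top-`q`
(descending) order statistics: `K_m(x_1,…,x_m) = K(x_{m:m},…,x_{m−q+1:m})`. -/
def Km {q : ℕ} (K : (Fin q → ℝ) → ℝ) (m : ℕ) (x : Fin m → ℝ) : ℝ :=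
  K fun j => descStat x (j : ℕ)

/-- `K(a x_1 + b, …, a x_q + b) = K(x_1, …, x_q)` for all `a > 0`, `b ∈ ℝ`. -/
def LocScaleInvariant {q : ℕ} (K : (Fin q → ℝ) → ℝ) : Prop :=
  ∀ a b : ℝ, 0 < a → ∀ x : Fin q → ℝ, K (fun j => a * x j + b) = K x

/-- `h_γ(y) = (y^γ - 1)/γ`, interpreted as `log y` when `γ = 0`. -/
def hGamma (γ : ℝ) (y : ℝ) : ℝ := if γ = 0 then Real.log y else (y ^ γ - 1) / γ

lemma measurable_hGamma (γ : ℝ) : Measurable (hGamma γ) := by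
  unfold hGamma
  split_ifs
  · exact Real.measurable_log
  · fun_prop

/-- The uniform distribution on `(0,1)`. -/
def unif01 : Measure ℝ := volume.restrict (Set.Ioo (0:ℝ) 1)

instance : IsProbabilityMeasure unif01 := ⟨by simp [unif01]⟩

/-- The standard Pareto(1) distribution, with cdf `1 - 1/y` for `y ≥ 1`. -/
def pareto1 : Measure ℝ := ProbabilityTheory.paretoMeasure 1 1

instance : IsProbabilityMeasure pareto1 :=
  ProbabilityTheory.isProbabilityMeasure_paretoMeasure one_pos one_pos

/-- The standard generalized Pareto distribution `GP(γ)`: the law of `h_γ(Y)` for `Y`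
standard Pareto(1). -/
def gpMeasure (γ : ℝ) : Measure ℝ := pareto1.map (hGamma γ)

instance (γ : ℝ) : IsProbabilityMeasure (gpMeasure γ) :=
  Measure.isProbabilityMeasure_map (measurable_hGamma γ).aemeasurable

/-- The unit exponential distribution: the law of `-log U` for `U` uniform on `(0,1)`. -/
def expMeasure1 : Measure ℝ := unif01.map fun u => -Real.log u

instance : IsProbabilityMeasure expMeasure1 :=
  Measure.isProbabilityMeasure_map Real.measurable_log.neg.aemeasurable

/-- The Erlang(q) distribution: the law of the sum of `q` independent unit exponentials. -/
def erlangMeasure (q : ℕ) : Measure ℝ :=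
  (Measure.pi fun _ : Fin q => expMeasure1).map fun e => ∑ i, e i

instance (q : ℕ) : IsProbabilityMeasure (erlangMeasure q) :=
  Measure.isProbabilityMeasure_map
    (Finset.measurable_sum _ fun i _ => measurable_pi_apply i).aemeasurable

/-- The joint law of `r` iid `GP(γ)` random variables. -/
def gpPi (γ : ℝ) (r : ℕ) : Measure (Fin r → ℝ) := Measure.pi fun _ => gpMeasure γ

instance (γ : ℝ) (r : ℕ) : IsProbabilityMeasure (gpPi γ r) := by
  unfold gpPi; infer_instance

/-- The vector `(Z_{q-j:q-1})_{j=1}^{q}`: the descending order statistics of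
`z_1,…,z_{q-1}` with an extra last entry `Z_{0:q-1} := 0`. -/
def refVec {q : ℕ} (z : Fin (q-1) → ℝ) : Fin q → ℝ := fun j => descStat z (j : ℕ)

/-- `θ = E[K((Z_{q-j:q-1})_{j=1}^{q})]` for iid `GP(γ)` variables `Z_1,…,Z_{q-1}`. -/
def thetaK (γ : ℝ) {q : ℕ} (K : (Fin q → ℝ) → ℝ) : ℝ :=
  ∫ z, K (refVec z) ∂(gpPi γ (q-1))

/-- all moments of `K((Z_{q-j:q-1})_{j=1}^{q})` are finite. -/
def MomentCond (γ : ℝ) {q : ℕ} (K : (Fin q → ℝ) → ℝ) : Prop :=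
  ∀ p : ℝ, 0 < p →
    ∫⁻ z, ENNReal.ofReal (|K (refVec z)| ^ p) ∂(gpPi γ (q-1)) < ⊤

/-- The asymptotic variance
`σ²_K(γ) = ∫_0^∞ (E[K̄_{q+1}((Z_{q-j:q-1})_{j=1}^q, h_γ(S_q/x))])² dx`. -/
def sigmaSqK (γ : ℝ) {q : ℕ} (K : (Fin q → ℝ) → ℝ) : ℝ :=
  ∫ x in Set.Ioi (0:ℝ),
    (∫ zs : (Fin (q-1) → ℝ) × ℝ,
        (Km K (q+1) (Fin.snoc (refVec zs.1) (hGamma γ (zs.2 / x))) - thetaK γ K)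
      ∂((gpPi γ (q-1)).prod (erlangMeasure q))) ^ 2

/-- The U-statistic with kernel `K_m` evaluated on the sample `z`. -/
def UStat {q : ℕ} (K : (Fin q → ℝ) → ℝ) (m n : ℕ) (z : Fin n → ℝ) : ℝ :=
  ((n.choose m : ℝ))⁻¹ *
    ∑ I ∈ Finset.powersetCard m (Finset.univ : Finset (Fin n)),
      Km K I.card fun j => z (I.orderIsoOfFin rfl j).1

/-- Condition on the degree sequence: `m = o(n^{1-ε})` and `log n = o(m^{1-δ})`. -/
def DegreeCond (m : ℕ → ℕ) : Prop :=
  ∃ ε > (0:ℝ), ∃ δ > (0:ℝ),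
    Tendsto (fun n => (m n : ℝ) / (n : ℝ) ^ (1 - ε)) atTop (𝓝 0) ∧
    Tendsto (fun n : ℕ => Real.log n / (m n : ℝ) ^ (1 - δ)) atTop (𝓝 0)

/-- `ζ_{m,ℓ} = cov(K_m(Z_S), K_m(Z_{S'}))` for the blocks `S = [1:m]`,
`S' = [(m-ℓ+1):(2m-ℓ)]` (zero-indexed here), which overlap in `ℓ` indices. -/
def zetaCov {Ω : Type*} [MeasurableSpace Ω] (P : Measure Ω) {q : ℕ}
    (K : (Fin q → ℝ) → ℝ) (Z : ℕ → Ω → ℝ) (m ℓ : ℕ) : ℝ :=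
  (∫ ω, Km K m (fun i : Fin m => Z i ω) * Km K m (fun i : Fin m => Z (m - ℓ + i) ω) ∂P)
    - (∫ ω, Km K m (fun i : Fin m => Z i ω) ∂P)
      * (∫ ω, Km K m (fun i : Fin m => Z (m - ℓ + i) ω) ∂P)

/-- Convergence in distribution to a Gaussian, expressed via pointwise convergence of
the cumulative distribution functions (the Gaussian cdf being continuous). -/
def TendstoGaussian {Ω : Type*} [MeasurableSpace Ω] (P : Measure Ω)
    (T : ℕ → Ω → ℝ) (μ : ℝ) (v : ℝ≥0) : Prop :=
  ∀ x : ℝ, Tendsto (fun n => (P {ω | T n ω ≤ x}).toReal) atTop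
    (𝓝 ((gaussianReal μ v (Set.Iic x)).toReal))

/-- Convergence in probability to the constant `c`. -/
def TendstoInProb {Ω : Type*} [MeasurableSpace Ω] (P : Measure Ω)
    (T : ℕ → Ω → ℝ) (c : ℝ) : Prop :=
  ∀ ε : ℝ, 0 < ε → Tendsto (fun n => (P {ω | ε ≤ |T n ω - c|}).toReal) atTop (𝓝 0)


open Finset in
lemma alt_Icc (A D : Finset ℕ) (h : D ⊆ A) :
    ∑ B ∈ A.powerset.filter (fun B => D ⊆ B), (-1:ℝ)^(B.card) = if D = A then (-1:ℝ)^(A.card) else 0 := by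
  have h1 : A.powerset.filter (fun B => D ⊆ B) = (A \ D).powerset.image (fun B => B ∪ D) := by
    ext B
    simp only [Finset.mem_filter, Finset.mem_powerset, Finset.mem_image]
    constructor
    · rintro ⟨h1, h2⟩
      exact ⟨B \ D, Finset.sdiff_subset_sdiff h1 le_rfl, Finset.sdiff_union_of_subset h2⟩
    · rintro ⟨C, hC, rfl⟩
      exact ⟨Finset.union_subset (hC.trans Finset.sdiff_subset) h, Finset.subset_union_right⟩
  have hd : ∀ C ∈ (A \ D).powerset, Disjoint C D := by
    intro C hC
    exact Finset.disjoint_of_subset_left (Finset.mem_powerset.1 hC) Finset.sdiff_disjoint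
  rw [h1, sum_image]
  · rw [sum_congr rfl (g := fun C => (-1:ℝ)^(D.card) * (-1:ℝ)^(C.card))]
    · rw [← mul_sum]
      have := Finset.sum_powerset_neg_one_pow_card (x := A \ D)
      have h2 : ∑ C ∈ (A \ D).powerset, (-1:ℝ)^(C.card) = if A \ D = ∅ then 1 else 0 := by
        exact_mod_cast congrArg (Int.cast : ℤ → ℝ) this
      rw [h2]
      by_cases hDA : D = A
      · subst hDA; simp
      · rw [if_neg hDA, if_neg, mul_zero]
        rw [Finset.sdiff_eq_empty_iff_subset]
        intro h3; exact hDA (subset_antisymm h h3)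
    · intro C hC
      rw [Finset.card_union_of_disjoint (hd C hC), pow_add, mul_comm]
  · intro C hC C' hC' e
    have := congrArg (· \ D) e
    simpa [Finset.union_sdiff_cancel_right (hd C hC), Finset.union_sdiff_cancel_right (hd C' hC')] using this

/-- finite differences at zero -/
noncomputable def dlt (ζ : ℕ → ℝ) (j : ℕ) : ℝ := (fwdDiff 1)^[j] ζ 0

open Finset in
lemma zeta_eq_sum_dlt {α : Type*} (ζ : ℕ → ℝ) (S : Finset α) :
    ζ S.card = ∑ A ∈ S.powerset, dlt ζ A.card := by
  have := shift_eq_sum_fwdDiff_iter (M := ℕ) (G := ℝ) 1 ζ S.card 0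
  simp only [smul_eq_mul, mul_one, zero_add] at this
  rw [this, sum_powerset_apply_card]
  rfl

open Finset in
lemma sumBC (ζ : ℕ → ℝ) (A : Finset ℕ) :
    ∑ B ∈ A.powerset, ∑ C ∈ A.powerset, (-1:ℝ)^B.card * (-1:ℝ)^C.card * ζ (B ∩ C).card
      = dlt ζ A.card := by
  have h : ∀ B ∈ A.powerset, ∀ C ∈ A.powerset,
      (-1:ℝ)^B.card * (-1:ℝ)^C.card * ζ (B ∩ C).card = ∑ D ∈ A.powerset,
        (if D ⊆ B then (-1:ℝ)^B.card else 0) * (if D ⊆ C then (-1:ℝ)^C.card else 0) * dlt ζ D.card := by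
    intro B hB C hC
    rw [zeta_eq_sum_dlt ζ (B ∩ C), mul_sum]
    have : (B ∩ C).powerset = A.powerset.filter (fun D => D ⊆ B ∧ D ⊆ C) := by
      ext D
      simp only [Finset.mem_powerset, Finset.mem_filter, Finset.subset_inter_iff]
      exact ⟨fun h => ⟨h.1.trans (Finset.mem_powerset.1 hB), h⟩, fun h => h.2⟩
    rw [this, sum_filter]
    refine sum_congr rfl fun D _ => ?_
    by_cases h1 : D ⊆ B <;> by_cases h2 : D ⊆ C <;> simp [h1, h2]
  rw [sum_congr rfl fun B hB => sum_congr rfl fun C hC => h B hB C hC]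
  have h3 : ∀ D ∈ A.powerset, ∑ B ∈ A.powerset, (if D ⊆ B then (-1:ℝ)^B.card else 0)
      = if D = A then (-1:ℝ)^(A.card) else 0 := by
    intro D hD
    rw [← sum_filter, alt_Icc A D (Finset.mem_powerset.1 hD)]
  calc _ = ∑ D ∈ A.powerset, (∑ B ∈ A.powerset, (if D ⊆ B then (-1:ℝ)^B.card else 0)) *
        (∑ B ∈ A.powerset, (if D ⊆ B then (-1:ℝ)^B.card else 0)) * dlt ζ D.card := by
        simp only [sum_mul_sum]; simp only [sum_mul]
        rw [sum_congr rfl fun B _ => sum_comm, sum_comm]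
    _ = ∑ D ∈ A.powerset, if D = A then dlt ζ A.card else 0 := by
        refine sum_congr rfl fun D hD => ?_
        rw [h3 D hD]
        split_ifs with h
        · subst h
          rw [← pow_add, ← two_mul, pow_mul]; simp
        · simp
    _ = _ := by simp

/-- positive semidefiniteness of the covariance sequence -/
def PSD (m : ℕ) (ζ : ℕ → ℝ) : Prop :=
  ∀ (s : Finset (Finset ℕ × ℕ)) (I : Finset ℕ × ℕ → Finset ℕ) (c : Finset ℕ × ℕ → ℝ),
    (∀ i ∈ s, (I i).card = m) →
    0 ≤ ∑ i ∈ s, ∑ j ∈ s, c i * c j * ζ (I i ∩ I j).card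

/-- the index sets -/
def blk (j m : ℕ) (p : Finset ℕ × ℕ) : Finset ℕ :=
  p.1 ∪ (Finset.range (m - p.1.card)).image (fun i => j + (i + m * Encodable.encode p))

open Finset in
lemma mem_blk {j m : ℕ} {p : Finset ℕ × ℕ} {x : ℕ} : x ∈ blk j m p ↔ x ∈ p.1 ∨
   ∃ i < m - p.1.card, j + (i + m * Encodable.encode p) = x := by
  simp [blk]

open Finset in
lemma blk_card {j m : ℕ} (hj : j ≤ m) {p : Finset ℕ × ℕ} (hp : p.1 ⊆ Finset.range j) :
    (blk j m p).card = m := by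
  rw [blk, Finset.card_union_of_disjoint, Finset.card_image_of_injective, Finset.card_range]
  · have := Finset.card_le_card hp
    rw [Finset.card_range] at this; omega
  · intro a b; simp
  · rw [Finset.disjoint_left]
    intro x hx hx'
    have := Finset.mem_range.1 (hp hx)
    simp at hx'
    omega

open Finset in
lemma blk_inter {j m : ℕ} {p p' : Finset ℕ × ℕ} (hp : p.1 ⊆ Finset.range j) (hp' : p'.1 ⊆ Finset.range j)
    (hne : p ≠ p') : blk j m p ∩ blk j m p' = p.1 ∩ p'.1 := by
  ext x
  rw [Finset.mem_inter, Finset.mem_inter, mem_blk, mem_blk]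
  constructor
  · rintro ⟨h1 | ⟨i, hi, h1⟩, h2 | ⟨i', hi', h2⟩⟩
    · exact ⟨h1, h2⟩
    · have := Finset.mem_range.1 (hp h1); omega
    · have := Finset.mem_range.1 (hp' h2); omega
    · exfalso
      have hm : 0 < m := by omega
      have e : i + m * Encodable.encode p = i' + m * Encodable.encode p' := by omega
      have e2 := congrArg (· / m) e
      simp only [Nat.add_mul_div_left _ _ hm, Nat.div_eq_of_lt (show i < m by omega),
        Nat.div_eq_of_lt (show i' < m by omega), zero_add] at e2
      exact hne (Encodable.encode_injective e2)
  · rintro ⟨h1, h2⟩; exact ⟨Or.inl h1, Or.inl h2⟩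

open Finset in
lemma dlt_nonneg (m : ℕ) (ζ : ℕ → ℝ) (h : PSD m ζ) (j : ℕ) (hj : j ≤ m) : 0 ≤ dlt ζ j := by
  set c : ℝ := ∑ B ∈ (Finset.range j).powerset, (ζ m - ζ B.card) with hc
  have key : ∀ N : ℕ, 0 ≤ (N:ℝ)^2 * dlt ζ j + N * c := by
    intro N
    have := h ((Finset.range j).powerset ×ˢ Finset.range N) (blk j m) (fun p => (-1:ℝ)^p.1.card)
      (fun p hp => blk_card hj (by simpa using (Finset.mem_product.1 hp).1))
    refine this.trans_eq ?_
    have e : ∀ p ∈ (Finset.range j).powerset ×ˢ Finset.range N, ∀ p' ∈ (Finset.range j).powerset ×ˢ Finset.range N,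
        (-1:ℝ)^p.1.card * (-1:ℝ)^p'.1.card * ζ (blk j m p ∩ blk j m p').card =
        (-1:ℝ)^p.1.card * (-1:ℝ)^p'.1.card * ζ (p.1 ∩ p'.1).card +
          if p = p' then (ζ m - ζ p.1.card) else 0 := by
      intro p hp p' hp'
      have hp1 := Finset.mem_powerset.1 (Finset.mem_product.1 hp).1
      have hp1' := Finset.mem_powerset.1 (Finset.mem_product.1 hp').1
      split_ifs with e
      · subst e
        rw [Finset.inter_self, Finset.inter_self, blk_card hj hp1, ← pow_add, ← two_mul, pow_mul]
        simp
      · rw [blk_inter hp1 hp1' e, add_zero]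
    rw [sum_congr rfl fun p hp => sum_congr rfl fun p' hp' => e p hp p' hp']
    simp only [sum_add_distrib]
    congr 1
    · have := sumBC ζ (Finset.range j)
      rw [Finset.card_range] at this
      rw [← this]
      simp only [sum_product, sum_const, Finset.card_range, nsmul_eq_mul, mul_sum]
      refine sum_congr rfl fun _ _ => sum_congr rfl fun _ _ => ?_
      ring
    · rw [sum_congr rfl (g := fun p => ζ m - ζ p.1.card)]
      · simp only [sum_product, sum_const, Finset.card_range, nsmul_eq_mul, ← mul_sum]
        rfl
      · intro p hp
        rw [sum_ite_eq, if_pos hp]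
  by_contra hneg
  push Not at hneg
  obtain ⟨N, hN⟩ := exists_nat_gt (|c| / (- dlt ζ j))
  rw [div_lt_iff₀ (by linarith)] at hN
  have h0 := key N
  have hNpos : (0:ℝ) < N := by
    rcases Nat.eq_zero_or_pos N with rfl | hp
    · simp at hN
      have := abs_nonneg c
      linarith
    · exact_mod_cast hp
  have : 0 ≤ (N:ℝ) * (N * dlt ζ j + c) := by nlinarith
  have := nonneg_of_mul_nonneg_right this hNpos
  have := le_abs_self c
  linarith

open Finset in
lemma sup_count {n : ℕ} (m : ℕ) (A : Finset (Fin n)) :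
    ((Finset.powersetCard m (Finset.univ : Finset (Fin n))).filter (fun I => A ⊆ I)).card =
      if A.card ≤ m then (n - A.card).choose (m - A.card) else 0 := by
  split_ifs with h
  · have e : (Finset.powersetCard m (Finset.univ : Finset (Fin n))).filter (fun I => A ⊆ I) =
      (Finset.powersetCard (m - A.card) Aᶜ).image (fun B => B ∪ A) := by
      ext I
      simp only [Finset.mem_filter, Finset.mem_powersetCard, Finset.mem_image, Finset.subset_univ, true_and]
      constructor
      · rintro ⟨h1, h2⟩
        exact ⟨I \ A, ⟨by intro x; simp, by rw [Finset.card_sdiff_of_subset h2, h1]⟩,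
          Finset.sdiff_union_of_subset h2⟩
      · rintro ⟨B, ⟨h1, h2⟩, rfl⟩
        refine ⟨?_, Finset.subset_union_right⟩
        rw [Finset.card_union_of_disjoint, h2]; omega
        exact Finset.disjoint_of_subset_left h1 disjoint_compl_left
    rw [e, Finset.card_image_of_injOn, Finset.card_powersetCard, Finset.card_compl, Fintype.card_fin]
    intro C hC C' hC' e
    have hd : ∀ C ∈ (Finset.powersetCard (m - A.card) Aᶜ), Disjoint C A := fun C hC =>
      Finset.disjoint_of_subset_left (Finset.mem_powersetCard.1 hC).1 disjoint_compl_left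
    have := congrArg (· \ A) e
    simpa [Finset.union_sdiff_cancel_right (hd C hC), Finset.union_sdiff_cancel_right (hd C' hC')] using this
  · rw [Finset.card_eq_zero, Finset.filter_eq_empty_iff]
    intro I hI h2
    rw [Finset.mem_powersetCard] at hI
    have := Finset.card_le_card h2
    omega

set_option maxHeartbeats 1000000 in
open Finset in
lemma var_bound (m n : ℕ) (hm : 2 ≤ m) (hmn : m ≤ n) (ζ : ℕ → ℝ) (h : PSD m ζ) (h0 : ζ 0 = 0) :
    |((n.choose m : ℝ))⁻¹ ^ 2 * ∑ I ∈ Finset.powersetCard m (Finset.univ : Finset (Fin n)),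
      ∑ J ∈ Finset.powersetCard m (Finset.univ : Finset (Fin n)), ζ (I ∩ J).card - (m:ℝ)^2 / n * ζ 1|
      ≤ ((m:ℝ)/n)^2 * ζ m := by
  obtain ⟨n', rfl⟩ : ∃ n', n = n' + 2 := ⟨n - 2, by omega⟩
  obtain ⟨m', rfl⟩ : ∃ m', m = m' + 2 := ⟨m - 2, by omega⟩
  set W := Finset.powersetCard (m' + 2) (Finset.univ : Finset (Fin (n' + 2)))
  set c : ℝ := ((n' + 2).choose (m' + 2) : ℝ) with hcdef
  have hc : 0 < c := by
    have := Nat.choose_pos hmn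
    rw [hcdef]; exact_mod_cast this
  have hn : (0:ℝ) < ((n' + 2 : ℕ) : ℝ) := by positivity
  set N : ℕ → ℝ := fun a => if a ≤ m' + 2 then ((n' + 2 - a).choose (m' + 2 - a) : ℝ) else 0 with hN
  have hcnt : ∀ A : Finset (Fin (n' + 2)), ∑ I ∈ W, (if A ⊆ I then (1:ℝ) else 0) = N A.card := by
    intro A
    rw [← sum_filter, sum_const, sup_count]
    simp only [hN]
    split_ifs <;> simp
  -- expansions
  have e1 : ∑ I ∈ W, ∑ J ∈ W, ζ (I ∩ J).card =
      ∑ A : Finset (Fin (n' + 2)), N A.card ^ 2 * dlt ζ A.card := by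
    have : ∀ I J : Finset (Fin (n' + 2)), ζ (I ∩ J).card = ∑ A : Finset (Fin (n' + 2)),
        (if A ⊆ I then (1:ℝ) else 0) * (if A ⊆ J then (1:ℝ) else 0) * dlt ζ A.card := by
      intro I J
      rw [zeta_eq_sum_dlt ζ (I ∩ J)]
      have : (I ∩ J).powerset = Finset.univ.filter (fun D => D ⊆ I ∧ D ⊆ J) := by
        ext D; simp only [Finset.mem_powerset, Finset.mem_filter, Finset.mem_univ, true_and, Finset.subset_inter_iff]
      rw [this, sum_filter]
      refine sum_congr rfl fun D _ => ?_
      by_cases h1 : D ⊆ I <;> by_cases h2 : D ⊆ J <;> simp [h1, h2]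
    simp only [this]
    calc _ = ∑ A : Finset (Fin (n' + 2)), (∑ I ∈ W, (if A ⊆ I then (1:ℝ) else 0)) *
        (∑ I ∈ W, (if A ⊆ I then (1:ℝ) else 0)) * dlt ζ A.card := by
          simp only [sum_mul_sum]; simp only [sum_mul]
          rw [sum_congr rfl fun B _ => sum_comm, sum_comm]
      _ = _ := by
        refine sum_congr rfl fun A _ => ?_
        rw [hcnt, sq]
  have e2 : c * ζ (m' + 2) = ∑ A : Finset (Fin (n' + 2)), N A.card * dlt ζ A.card := by
    have : ∀ I ∈ W, ζ (m' + 2) = ∑ A : Finset (Fin (n' + 2)),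
        (if A ⊆ I then (1:ℝ) else 0) * dlt ζ A.card := by
      intro I hI
      rw [← (Finset.mem_powersetCard.1 hI).2, zeta_eq_sum_dlt ζ I]
      have : I.powerset = Finset.univ.filter (fun D => D ⊆ I) := by ext D; simp
      rw [this, sum_filter]
      refine sum_congr rfl fun D _ => ?_
      by_cases h1 : D ⊆ I <;> simp [h1]
    have h2 : ∑ I ∈ W, ζ (m' + 2) = c * ζ (m' + 2) := by
      rw [sum_const, Finset.card_powersetCard]; simp [hcdef]
    rw [← h2, sum_congr rfl this, sum_comm]
    refine sum_congr rfl fun A _ => ?_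
    rw [← sum_mul, hcnt]
  -- by cardinality
  have byc : ∀ F : ℕ → ℝ, ∑ A : Finset (Fin (n' + 2)), F A.card =
      ∑ a ∈ Finset.range (n' + 2 +1), ((n' + 2).choose a : ℝ) * F a := by
    intro F
    have := sum_powerset_apply_card F (x := (Finset.univ : Finset (Fin (n' + 2))))
    rw [Finset.powerset_univ] at this
    rw [this]; simp
  rw [byc (fun a => N a ^ 2 * dlt ζ a)] at e1
  rw [byc (fun a => N a * dlt ζ a)] at e2
  have d0 : dlt ζ 0 = 0 := by simp [dlt, h0]
  have d1 : dlt ζ 1 = ζ 1 := by simp [dlt, fwdDiff, h0]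
  rw [sum_range_succ', sum_range_succ'] at e1 e2
  simp only [d0, mul_zero, add_zero, zero_add, d1, Nat.choose_one_right] at e1 e2
  have hN1 : N 1 * (n' + 2 : ℕ) = c * (m' + 2 : ℕ) := by
    have := Nat.add_one_mul_choose_eq (n' + 1) (m' + 1)
    simp only [hN, hcdef]
    rw [if_pos (by omega)]
    have h2 : ((n'+1+1) * (n'+1).choose (m'+1) : ℝ) = ((n'+2).choose (m'+2)) * (m'+1+1) := by
      exact_mod_cast this
    push_cast
    try simp only [show n' + 2 - 1 = n' + 1 by omega,
      show m' + 2 - 1 = m' + 1 by omega]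
    linarith
  have hN2 : N 2 * (n' + 1 : ℕ) = N 1 * (m' + 1 : ℕ) := by
    have := Nat.add_one_mul_choose_eq n' m'
    simp only [hN]
    rw [if_pos (by omega), if_pos (by omega)]
    have h2 : ((n'+1) * n'.choose m' : ℝ) = ((n'+1).choose (m'+1)) * (m'+1) := by
      exact_mod_cast this
    push_cast
    try simp only [show n' + 2 - 1 = n' + 1 by omega,
      show m' + 2 - 1 = m' + 1 by omega, Nat.add_sub_cancel]
    linarith
  have hNnn : ∀ a, 0 ≤ N a := by
    intro a; simp only [hN]; split_ifs <;> positivity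
  have hNle : ∀ a, N (a + 2) ≤ N 2 := by
    intro a
    induction a with
    | zero => simp
    | succ a ih =>
      refine le_trans ?_ ih
      simp only [hN]
      split_ifs with h1 h2 h2
      · have h3 := Nat.choose_le_choose (m' + 2 - (a + 1 + 2)) (show n' + 2 - (a+1+2) ≤ n' + 2 - (a+2) by omega)
        have := Nat.add_one_mul_choose_eq (n' + 2 - (a+1+2)) (m' + 2 - (a+1+2))
        rw [show n' + 2 - (a+1+2) + 1 = n' + 2 - (a+2) by omega, show m' + 2 - (a+1+2) + 1 = m' + 2 - (a+2) by omega] at this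
        have h5 : m' + 2 - (a+2) ≤ n' + 2 - (a+2) := by omega
        have h6 : (n' + 2 - (a + 1 + 2)).choose (m' + 2 - (a + 1 + 2)) ≤ (n' + 2 - (a + 2)).choose (m' + 2 - (a + 2)) := by
          have h7 : 0 < m' + 2 - (a + 2) := by omega
          by_contra hh
          push Not at hh
          have := Nat.mul_lt_mul_of_le_of_lt h5 hh (by omega)
          nlinarith
        exact_mod_cast h6
      · omega
      · positivity
      · exact le_rfl
  set S : ℝ := ∑ a ∈ Finset.range (n'+1), ((n'+2).choose (a+1+1) : ℝ) * (N (a+1+1) ^ 2 * dlt ζ (a+1+1)) with hS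
  set T : ℝ := ∑ a ∈ Finset.range (n'+1), ((n'+2).choose (a+1+1) : ℝ) * (N (a+1+1) * dlt ζ (a+1+1)) with hT
  have hNd : ∀ a, 0 ≤ N a * dlt ζ a := by
    intro a
    by_cases ha : a ≤ m' + 2
    · exact mul_nonneg (hNnn a) (dlt_nonneg _ ζ h a ha)
    · simp [hN, ha]
  have hS0 : 0 ≤ S := by
    refine sum_nonneg fun a _ => ?_
    have := mul_nonneg (hNnn (a+1+1)) (hNd (a+1+1))
    rw [sq, mul_assoc]
    positivity
  have hST : S ≤ N 2 * T := by
    rw [hS, hT, mul_sum]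
    refine sum_le_sum fun a _ => ?_
    have := mul_le_mul_of_nonneg_right (hNle a) (hNd (a+1+1))
    rw [mul_left_comm (N 2)]
    refine mul_le_mul_of_nonneg_left ?_ (Nat.cast_nonneg _)
    calc _ = N (a+2) * (N (a+1+1) * dlt ζ (a+1+1)) := by ring
      _ ≤ _ := this
  have hTle : T ≤ c * ζ (m'+2) := by
    have h1 := hNd 1
    rw [d1] at h1
    rw [e2]
    have : (0:ℝ) ≤ ((n'+2 : ℕ):ℝ) * (N 1 * ζ 1) := by positivity
    linarith
  have hT0 : 0 ≤ T := by
    rw [hT]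
    refine sum_nonneg fun a _ => ?_
    have := hNd (a+1+1)
    positivity
  have hN1' : N 1 = c * ((m' + 2 : ℕ) / (n' + 2 : ℕ)) := by
    field_simp; linarith
  have hN2' : N 2 ≤ c * (((m' + 2 : ℕ) / (n' + 2 : ℕ)))^2 := by
    have h1 : N 2 = N 1 * ((m' + 1 : ℕ) / (n' + 1 : ℕ)) := by
      field_simp; linarith
    rw [h1, hN1', sq, mul_assoc]
    refine mul_le_mul_of_nonneg_left (mul_le_mul_of_nonneg_left ?_ (by positivity)) hc.le
    rw [div_le_div_iff₀ (by positivity) (by positivity)]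
    have : m' ≤ n' := by omega
    have : (m':ℝ) ≤ n' := by exact_mod_cast this
    push_cast
    nlinarith
  have hmain : c⁻¹ ^ 2 * (S + ((n'+2 : ℕ):ℝ) * (N 1 ^ 2 * ζ 1)) -
      ((m'+2 : ℕ):ℝ)^2 / (n'+2 : ℕ) * ζ 1 = c⁻¹ ^ 2 * S := by
    rw [hN1']
    field_simp
    ring
  rw [e1, hmain, abs_of_nonneg (by positivity)]
  have hζ : 0 ≤ c * ζ (m'+2) := hT0.trans hTle
  calc c⁻¹ ^ 2 * S ≤ c⁻¹ ^ 2 * ((c * (((m' + 2 : ℕ) / (n' + 2 : ℕ)))^2) * (c * ζ (m'+2))) := by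
        refine mul_le_mul_of_nonneg_left ?_ (by positivity)
        refine hST.trans ?_
        exact mul_le_mul hN2' hTle hT0 (by positivity)
    _ = _ := by field_simp

lemma sort_eq_of_mono {m : ℕ} (x g : Fin m → ℝ) (τ : Equiv.Perm (Fin m)) (hg : Monotone g)
    (h : x ∘ τ = g) : x ∘ Tuple.sort x = g := by
  rw [← h]
  exact Tuple.unique_monotone (Tuple.monotone_sort x) (by rw [h]; exact hg)

lemma descStat_perm {m : ℕ} (x : Fin m → ℝ) (σ : Equiv.Perm (Fin m)) (j : ℕ) :
    descStat (x ∘ σ) j = descStat x j := by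
  have : (x ∘ σ) ∘ Tuple.sort (x ∘ σ) = x ∘ Tuple.sort x := by
    refine sort_eq_of_mono _ _ ((Tuple.sort x).trans σ.symm) (Tuple.monotone_sort x) ?_
    ext i; simp
  unfold descStat
  rw [this]

lemma descStat_equiv {m m' : ℕ} (x : Fin m' → ℝ) (σ : Fin m ≃ Fin m') (j : ℕ) :
    descStat (x ∘ σ) j = descStat x j := by
  have : m = m' := by simpa using Fintype.card_congr σ
  subst this
  exact descStat_perm x σ j

lemma descStat_affine {m : ℕ} (x : Fin m → ℝ) (a b : ℝ) (ha : 0 < a) (j : ℕ) (hj : j < m) :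
    descStat (fun i => a * x i + b) j = a * descStat x j + b := by
  have : (fun i => a * x i + b) ∘ Tuple.sort (fun i => a * x i + b) =
      fun i => a * (x ∘ Tuple.sort x) i + b := by
    refine sort_eq_of_mono _ _ (Tuple.sort x) ?_ rfl
    intro i k hik
    have := Tuple.monotone_sort x hik
    simp only
    nlinarith
  unfold descStat
  rw [dif_pos hj, dif_pos hj, this]

lemma descStat_cons_zero {m : ℕ} (y : Fin m → ℝ) (hy : ∀ i, 0 ≤ y i) (j : ℕ) (hj : j < m + 1) :
    descStat (Fin.cons 0 y : Fin (m+1) → ℝ) j = descStat y j := by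
  have : (Fin.cons 0 y : Fin (m+1) → ℝ) ∘ Tuple.sort (Fin.cons 0 y : Fin (m+1) → ℝ) =
      (Fin.cons 0 (y ∘ Tuple.sort y) : Fin (m+1) → ℝ) := by
    refine sort_eq_of_mono _ _ (Equiv.Perm.decomposeFin.symm (0, Tuple.sort y)) ?_ ?_
    · intro i k hik
      induction i using Fin.cases with
      | zero =>
        induction k using Fin.cases with
        | zero => simp
        | succ k => simpa using hy _
      | succ i =>
        induction k using Fin.cases with
        | zero => exact absurd hik (by simp)
        | succ k => simpa using Tuple.monotone_sort y (Fin.succ_le_succ_iff.1 hik)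
    · ext i
      induction i using Fin.cases with
      | zero => simp
      | succ i => simp
  unfold descStat
  rw [dif_pos hj, this]
  split_ifs with h
  · have : (⟨m + 1 - 1 - j, by omega⟩ : Fin (m+1)) = Fin.succ ⟨m - 1 - j, by omega⟩ := by
      ext; simp; omega
    rw [this, Fin.cons_succ]
  · have : (⟨m + 1 - 1 - j, by omega⟩ : Fin (m+1)) = 0 := by
      ext; simp; omega
    rw [this, Fin.cons_zero]

lemma measurable_sort (m : ℕ) (k : Fin m) :
    Measurable (fun x : Fin m → ℝ => (x ∘ Tuple.sort x) k) := by
  have h : (fun x : Fin m → ℝ => (x ∘ Tuple.sort x) k) = fun x => ∑ σ : Equiv.Perm (Fin m),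
      {x : Fin m → ℝ | σ = Tuple.sort x}.indicator (fun x => x (σ k)) x := by
    ext x
    rw [Finset.sum_eq_single (Tuple.sort x)]
    · simp
    · intro σ _ hσ
      simp [hσ]
    · simp
  rw [h]
  refine Finset.measurable_sum _ fun σ _ => (measurable_pi_apply _).indicator ?_
  have : {x : Fin m → ℝ | σ = Tuple.sort x} =
      (⋂ i, ⋂ j, ⋂ (_ : i ≤ j), {x : Fin m → ℝ | x (σ i) ≤ x (σ j)}) ∩
      (⋂ i, ⋂ j, ⋂ (_ : i < j), ⋂ (_ : ¬ σ i < σ j), {x : Fin m → ℝ | x (σ i) = x (σ j)}ᶜ) := by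
    ext x
    rw [mem_ofPred_eq, Tuple.eq_sort_iff]
    simp only [Monotone, mem_inter_iff, mem_iInter, mem_compl_iff, mem_ofPred_eq,
      Function.comp_apply]
    refine and_congr Iff.rfl ?_
    refine forall_congr' fun i => forall_congr' fun j => forall_congr' fun _ => ?_
    tauto
  rw [this]
  refine MeasurableSet.inter ?_ ?_
  · exact MeasurableSet.iInter fun i => MeasurableSet.iInter fun j => MeasurableSet.iInter fun _ =>
      measurableSet_le (measurable_pi_apply _) (measurable_pi_apply _)
  · exact MeasurableSet.iInter fun i => MeasurableSet.iInter fun j => MeasurableSet.iInter fun _ =>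
      MeasurableSet.iInter fun _ =>
      (measurableSet_eq_fun (measurable_pi_apply (σ i)) (measurable_pi_apply (σ j))).compl

lemma measurable_descStat (m j : ℕ) : Measurable (fun x : Fin m → ℝ => descStat x j) := by
  unfold descStat
  split_ifs with h
  · exact measurable_sort m _
  · exact measurable_const

lemma measurable_Km {q : ℕ} {K : (Fin q → ℝ) → ℝ} (hK : Measurable K) (m : ℕ) :
    Measurable (Km K m) :=
  hK.comp (measurable_pi_lambda _ fun j => measurable_descStat m j)

lemma paretoPDF_one (x : ℝ) : paretoPDF 1 1 x =
    (Ici (1:ℝ)).indicator (fun x => ENNReal.ofReal (x ^ (-2:ℝ))) x := by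
  rw [paretoPDF_eq, indicator_apply]
  split_ifs with h1 h2 h2
  · norm_num
  · exact absurd h1 h2
  · exact absurd h2 h1
  · simp

lemma measurable_pdf1 : Measurable (paretoPDF 1 1) :=
  (measurable_paretoPDFReal 1 1).ennreal_ofReal

lemma ae_one_le : ∀ᵐ t ∂pareto1, 1 ≤ t := by
  rw [pareto1, paretoMeasure, ae_withDensity_iff measurable_pdf1]
  refine Eventually.of_forall fun x hx => ?_
  rw [paretoPDF_one] at hx
  by_contra h
  exact hx (indicator_of_notMem h _)

lemma lintegral_vol_scale (t : ℝ) (ht : 0 < t) (g : ℝ → ℝ≥0∞) (hg : Measurable g) :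
    ∫⁻ x, g x = ENNReal.ofReal t * ∫⁻ y, g (t * y) := by
  conv_lhs => rw [← Real.smul_map_volume_mul_left ht.ne']
  rw [lintegral_smul_measure, lintegral_map hg (by fun_prop), abs_of_pos ht, smul_eq_mul]

lemma pareto_restrict (t : ℝ) (ht : 1 ≤ t) :
    pareto1.restrict (Ici t) = ENNReal.ofReal t⁻¹ • pareto1.map (fun y => t * y) := by
  have t0 : 0 < t := by linarith
  have hpm : Measurable (paretoPDF 1 1) := measurable_pdf1
  ext s hs
  rw [Measure.restrict_apply hs, Measure.smul_apply, Measure.map_apply (by fun_prop) hs,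
    smul_eq_mul, pareto1, paretoMeasure, withDensity_apply _ (hs.inter measurableSet_Ici),
    withDensity_apply _ ((measurable_const_mul t) hs),
    ← lintegral_indicator (hs.inter measurableSet_Ici),
    ← lintegral_indicator ((measurable_const_mul t) hs),
    lintegral_vol_scale t t0 _ (hpm.indicator (hs.inter measurableSet_Ici)),
    ← lintegral_const_mul (f := fun y => (s ∩ Ici t).indicator (paretoPDF 1 1) (t * y)) _
      ((hpm.indicator (hs.inter measurableSet_Ici)).comp (measurable_const_mul t)),
    ← lintegral_const_mul _ (hpm.indicator ((measurable_const_mul t) hs))]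
  refine lintegral_congr fun y => ?_
  by_cases hy : t * y ∈ s
  · by_cases hy1 : 1 ≤ y
    · have h1 : t ≤ t * y := by nlinarith
      have h2 : 1 ≤ t * y := by linarith
      rw [indicator_of_mem (by exact ⟨hy, h1⟩), indicator_of_mem (by exact hy), paretoPDF_one,
        paretoPDF_one, indicator_of_mem (by exact h2), indicator_of_mem (by exact hy1),
        ← ENNReal.ofReal_mul t0.le, ← ENNReal.ofReal_mul (by positivity)]
      congr 1
      rw [Real.mul_rpow t0.le (by linarith), Real.rpow_neg t0.le]
      norm_num
      field_simp
    · have h1 : ¬ t ≤ t * y := by nlinarith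
      rw [indicator_of_notMem (fun h => h1 h.2), indicator_of_mem (by exact hy), paretoPDF_one,
        indicator_of_notMem (by exact hy1)]
      simp
  · rw [indicator_of_notMem (fun h => hy h.1), indicator_of_notMem (by exact hy)]
    simp

lemma pareto_int (m : ℕ) : ((m : ℝ≥0∞) + 1) * ∫⁻ t, ENNReal.ofReal t⁻¹ ^ m ∂pareto1 = 1 := by
  have e : ∫⁻ t, ENNReal.ofReal t⁻¹ ^ m ∂pareto1 = ENNReal.ofReal (1 / (m + 1)) := by
    rw [pareto1, paretoMeasure, lintegral_withDensity_eq_lintegral_mul _ measurable_pdf1 (by fun_prop)]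
    have h1 : ∀ t : ℝ, ((paretoPDF 1 1) * fun t => ENNReal.ofReal t⁻¹ ^ m) t =
      (Ici (1:ℝ)).indicator (fun t => ENNReal.ofReal (t ^ (-(m + 2) : ℝ))) t := by
      intro t
      rw [Pi.mul_apply, paretoPDF_one]
      by_cases ht : t ∈ Ici (1:ℝ)
      · rw [indicator_of_mem ht, indicator_of_mem ht]
        have t0 : (0:ℝ) < t := lt_of_lt_of_le one_pos ht
        rw [← ENNReal.ofReal_pow (by positivity), ← ENNReal.ofReal_mul (by positivity)]
        congr 1
        rw [neg_add, Real.rpow_add t0, Real.rpow_neg t0.le, Real.rpow_neg t0.le, Real.rpow_natCast,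
          inv_pow, mul_comm]
      · rw [indicator_of_notMem ht, indicator_of_notMem ht, zero_mul]
    rw [lintegral_congr h1, lintegral_indicator measurableSet_Ici,
      setLIntegral_congr Ioi_ae_eq_Ici.symm]
    have hlt : (-(m + 2) : ℝ) < -1 := by
      have : (0:ℝ) ≤ m := by positivity
      linarith
    rw [← ofReal_integral_eq_lintegral_ofReal (integrableOn_Ioi_rpow_of_lt hlt one_pos)]
    · rw [integral_Ioi_rpow_of_lt hlt one_pos]
      congr 1
      rw [Real.one_rpow]
      have : (m:ℝ) + 1 ≠ 0 := by positivity
      rw [show (-(m+2) + 1 : ℝ) = -(m+1) by ring, neg_div_neg_eq]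
    · rw [EventuallyLE, ae_restrict_iff' measurableSet_Ioi]
      refine Eventually.of_forall fun t ht => ?_
      have : (0:ℝ) < t := lt_trans one_pos ht
      simp only [Pi.zero_apply]
      positivity
  rw [e]
  have : ((m : ℝ≥0∞) + 1) = ENNReal.ofReal (m + 1) := by
    rw [ENNReal.ofReal_add (by positivity) (by positivity)]; simp
  rw [this, ← ENNReal.ofReal_mul (by positivity), mul_one_div_cancel (by positivity)]
  simp

/-- product Pareto -/
def parPi (m : ℕ) : Measure (Fin m → ℝ) := Measure.pi fun _ => pareto1

instance (m : ℕ) : IsProbabilityMeasure (parPi m) := by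
  unfold parPi; infer_instance

lemma parPi_restrict (m : ℕ) (t : ℝ) (ht : 1 ≤ t) :
    (parPi m).restrict (univ.pi fun _ => Ici t) =
      ENNReal.ofReal t⁻¹ ^ m • (parPi m).map (fun y i => t * y i) := by
  rw [parPi, Measure.restrict_pi_pi]
  have : IsProbabilityMeasure (pareto1.map (fun y => t * y)) :=
    Measure.isProbabilityMeasure_map (by fun_prop)
  rw [Measure.pi_map_pi (μ := fun _ : Fin m => pareto1) (f := fun _ y => t * y) (fun _ => by fun_prop)]
  refine Measure.pi_eq fun s hs => ?_
  simp only [pareto_restrict t ht, Measure.smul_apply, Measure.pi_pi, smul_eq_mul,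
    Finset.prod_mul_distrib, Finset.prod_const, Finset.card_univ, Fintype.card_fin]

lemma step_ineq (m : ℕ) (G : (Fin (m+1) → ℝ) → ℝ≥0∞) (hG : Measurable G)
    (G' : (Fin m → ℝ) → ℝ≥0∞)
    (h : ∀ (i : Fin (m+1)) (t : ℝ), 1 ≤ t → ∀ y : Fin m → ℝ, (∀ j, 1 ≤ y j) →
      G (i.insertNth t (fun j => t * y j)) = G' y) :
    ∫⁻ x, G x ∂(parPi (m+1)) ≤ ∫⁻ y, G' y ∂(parPi m) := by
  set M : Fin (m+1) → Set (Fin (m+1) → ℝ) := fun i => {x | ∀ j, x i ≤ x j} with hM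
  have hMm : ∀ i, MeasurableSet (M i) := by
    intro i
    have : M i = ⋂ j, {x | x i ≤ x j} := by ext x; simp [hM]
    rw [this]
    exact MeasurableSet.iInter fun j => measurableSet_le (measurable_pi_apply _) (measurable_pi_apply _)
  have h1 : ∀ x, G x ≤ ∑ i, (M i).indicator G x := by
    intro x
    obtain ⟨i, hi⟩ := Finite.exists_min x
    refine le_trans ?_ (Finset.single_le_sum (f := fun i => (M i).indicator G x) (fun _ _ => by positivity) (Finset.mem_univ i))
    rw [indicator_of_mem (by exact hi)]
  have hae : ∀ᵐ y ∂(parPi m), ∀ j, 1 ≤ y j := by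
    rw [ae_all_iff]
    intro j
    exact (Measure.tendsto_eval_ae_ae (μ := fun _ : Fin m => pareto1) (i := j)).eventually ae_one_le
  have h2 : ∀ i, ∫⁻ x, (M i).indicator G x ∂(parPi (m+1)) =
      (∫⁻ t, ENNReal.ofReal t⁻¹ ^ m ∂pareto1) * ∫⁻ y, G' y ∂(parPi m) := by
    intro i
    have mp := (measurePreserving_piFinSuccAbove (fun _ : Fin (m+1) => pareto1) i).symm
    have hGi : Measurable ((M i).indicator G) := hG.indicator (hMm i)
    rw [parPi, ← mp.lintegral_comp hGi,
      lintegral_prod (fun z => (M i).indicator G ((MeasurableEquiv.piFinSuccAbove (fun x => ℝ) i).symm z)) (hGi.comp mp.measurable).aemeasurable,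
      ← lintegral_mul_const _ (by fun_prop)]
    refine lintegral_congr_ae ?_
    filter_upwards [ae_one_le] with t ht
    have e1 : ∀ y : Fin m → ℝ, (M i).indicator G ((MeasurableEquiv.piFinSuccAbove (fun _ => ℝ) i).symm (t, y))
       = (univ.pi fun _ => Ici t).indicator (fun y => G (i.insertNth t y)) y := by
      intro y
      have e0 : (MeasurableEquiv.piFinSuccAbove (fun _ => ℝ) i).symm (t, y) = i.insertNth t y := rfl
      rw [e0]
      have : (i.insertNth t y : Fin (m+1) → ℝ) ∈ M i ↔ y ∈ (univ.pi fun _ => Ici t) := by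
        simp only [hM, mem_ofPred_eq, Fin.insertNth_apply_same, mem_univ_pi, mem_Ici]
        rw [Fin.forall_iff_succAbove i]
        simp
      by_cases hy : y ∈ (univ.pi fun _ => Ici t)
      · rw [indicator_of_mem hy, indicator_of_mem (this.2 hy)]
      · rw [indicator_of_notMem hy, indicator_of_notMem (fun h => hy (this.1 h))]
    have hins : Measurable (fun y : Fin m → ℝ => G (i.insertNth t y)) :=
      hG.comp ((MeasurableEquiv.piFinSuccAbove (fun _ => ℝ) i).symm.measurable.comp
        (measurable_const.prodMk measurable_id))
    rw [lintegral_congr e1, lintegral_indicator (MeasurableSet.univ_pi fun _ => measurableSet_Ici)]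
    change ∫⁻ y in _, _ ∂(parPi m) = _
    rw [parPi_restrict m t ht, lintegral_smul_measure, lintegral_map hins (by fun_prop), smul_eq_mul]
    congr 1
    refine lintegral_congr_ae ?_
    filter_upwards [hae] with y hy
    exact h i t ht y hy
  calc _ ≤ ∫⁻ x, ∑ i, (M i).indicator G x ∂(parPi (m+1)) := lintegral_mono h1
    _ = ∑ i, ∫⁻ x, (M i).indicator G x ∂(parPi (m+1)) :=
        lintegral_finsetSum _ fun i _ => hG.indicator (hMm i)
    _ = (((m : ℝ≥0∞) + 1) * (∫⁻ t, ENNReal.ofReal t⁻¹ ^ m ∂pareto1)) * ∫⁻ y, G' y ∂(parPi m) := by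
        simp only [h2]
        simp [mul_assoc]
    _ = _ := by rw [pareto_int, one_mul]

lemma hGamma_mul (γ t y : ℝ) (ht : 0 < t) (hy : 0 < y) :
    hGamma γ (t * y) = t ^ γ * hGamma γ y + hGamma γ t := by
  unfold hGamma
  split_ifs with h
  · subst h; rw [Real.log_mul ht.ne' hy.ne']; simp [add_comm]
  · rw [Real.mul_rpow ht.le hy.le]; field_simp; ring

lemma hGamma_nonneg (γ y : ℝ) (hy : 1 ≤ y) : 0 ≤ hGamma γ y := by
  unfold hGamma
  split_ifs with h
  · exact Real.log_nonneg hy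
  · rcases lt_or_gt_of_ne h with h | h
    · have := Real.rpow_le_one_of_one_le_of_nonpos hy h.le
      exact div_nonneg_of_nonpos (by linarith) h.le
    · have := Real.one_le_rpow hy h.le
      exact div_nonneg (by linarith) h.le

lemma gpPi_eq (γ : ℝ) (r : ℕ) : gpPi γ r = (parPi r).map (fun y i => hGamma γ (y i)) := by
  unfold gpPi parPi gpMeasure
  have : IsProbabilityMeasure (pareto1.map (hGamma γ)) :=
    Measure.isProbabilityMeasure_map (measurable_hGamma γ).aemeasurable
  rw [Measure.pi_map_pi (μ := fun _ : Fin r => pareto1) (f := fun _ => hGamma γ)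
    (fun _ => (measurable_hGamma γ).aemeasurable)]

lemma gp_step (γ : ℝ) (q : ℕ) (F : (Fin q → ℝ) → ℝ≥0∞) (hF : Measurable F)
    (hinv : ∀ a b : ℝ, 0 < a → ∀ x : Fin q → ℝ, F (fun j => a * x j + b) = F x)
    (m : ℕ) (hm : q ≤ m + 1) :
    ∫⁻ x, F (fun j => descStat x j) ∂(gpPi γ (m+1)) ≤ ∫⁻ x, F (fun j => descStat x j) ∂(gpPi γ m) := by
  have hh := measurable_hGamma γ
  have hFm : ∀ r, Measurable fun x : Fin r → ℝ => F (fun j => descStat x j) := fun r =>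
    hF.comp (measurable_pi_lambda _ fun j => measurable_descStat r j)
  have hcomp : ∀ r, Measurable fun (y : Fin r → ℝ) (i : Fin r) => hGamma γ (y i) := fun r =>
    measurable_pi_lambda _ fun i => hh.comp (measurable_pi_apply i)
  rw [gpPi_eq, gpPi_eq, lintegral_map (hFm _) (hcomp _), lintegral_map (hFm _) (hcomp _)]
  refine step_ineq m _ ((hFm _).comp (hcomp _)) _ ?_
  intro i t ht y hy
  have t0 : 0 < t := by linarith
  rw [← hinv (t ^ γ) (hGamma γ t) (by positivity)]
  refine congrArg F (funext fun j => ?_)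
  rw [← descStat_cons_zero _ (fun i => hGamma_nonneg γ _ (hy i)) j (by omega),
    ← descStat_affine _ _ _ (by positivity) j (by omega)]
  symm
  rw [← descStat_perm _ (i.cycleRange)]
  symm
  congr 1
  ext k
  induction k using Fin.succAboveCases i with
  | x => simp
  | p k =>
    simp [hGamma_mul γ t _ t0 (lt_of_lt_of_le one_pos (hy k))]

lemma gp_bound (γ : ℝ) (q : ℕ) (hq : 1 ≤ q) (F : (Fin q → ℝ) → ℝ≥0∞) (hF : Measurable F)
    (hinv : ∀ a b : ℝ, 0 < a → ∀ x : Fin q → ℝ, F (fun j => a * x j + b) = F x)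
    (m : ℕ) (hm : q ≤ m + 1) :
    ∫⁻ x, F (fun j => descStat x j) ∂(gpPi γ m) ≤ ∫⁻ x, F (fun j => descStat x j) ∂(gpPi γ (q - 1)) := by
  obtain ⟨d, rfl⟩ : ∃ d, m = (q - 1) + d := ⟨m - (q-1), by omega⟩
  clear hm
  induction d with
  | zero => exact le_rfl
  | succ d ih => exact (gp_step γ q F hF hinv (q - 1 + d) (by omega)).trans ih

lemma Km_range {q : ℕ} (K : (Fin q → ℝ) → ℝ) {α : Type*} {m m' : ℕ} (e : Fin m → α) (e' : Fin m' → α)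
    (he : Function.Injective e) (he' : Function.Injective e') (hr : Set.range e = Set.range e')
    (z : α → ℝ) : Km K m (fun j => z (e j)) = Km K m' (fun j => z (e' j)) := by
  let σ : Fin m ≃ Fin m' := (Equiv.ofInjective e he).trans
    ((Equiv.setCongr hr).trans (Equiv.ofInjective e' he').symm)
  have hσ : ∀ j, e' (σ j) = e j := by
    intro j
    have := Equiv.apply_ofInjective_symm he' (Equiv.setCongr hr (Equiv.ofInjective e he j))
    exact this
  have h2 : (fun j => z (e j)) = (fun j => z (e' j)) ∘ σ := by
    ext j; simp [hσ]
  unfold Km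
  rw [h2]
  simp only [descStat_equiv]

/-- kernel on the index set `I` -/
def YY {Ω : Type*} {q : ℕ} (K : (Fin q → ℝ) → ℝ) (Z : ℕ → Ω → ℝ) (I : Finset ℕ) (ω : Ω) : ℝ :=
  Km K I.card fun j => Z (I.orderEmbOfFin rfl j) ω

lemma YY_eq {Ω : Type*} {q : ℕ} (K : (Fin q → ℝ) → ℝ) (Z : ℕ → Ω → ℝ) (I : Finset ℕ) {m : ℕ}
    (e : Fin m → ℕ) (he : Function.Injective e) (hr : Set.range e = I) (ω : Ω) :
    Km K m (fun j => Z (e j) ω) = YY K Z I ω :=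
  Km_range K e _ he (I.orderEmbOfFin rfl).injective (by rw [hr, Finset.range_orderEmbOfFin])
    (fun i => Z i ω)

lemma law {Ω : Type*} [MeasurableSpace Ω] (P : Measure Ω) [IsProbabilityMeasure P]
    (γ : ℝ) (Z : ℕ → Ω → ℝ) (hZmeas : ∀ i, Measurable (Z i))
    (hIndep : iIndepFun Z P) (hDist : ∀ i, Measure.map (Z i) P = gpMeasure γ)
    {ι : Type*} [Fintype ι] (φ : ι → ℕ) (hφ : Function.Injective φ) :
    P.map (fun ω i => Z (φ i) ω) = Measure.pi (fun _ : ι => gpMeasure γ) := by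
  rw [(iIndepFun_iff_map_fun_eq_pi_map (fun i => (hZmeas (φ i)).aemeasurable)).1
    (hIndep.precomp hφ)]
  simp only [hDist]

lemma exists_phi (I J I0 J0 : Finset ℕ) (h1 : I0.card = I.card) (h2 : J0.card = J.card)
    (h3 : (I0 ∩ J0).card = (I ∩ J).card) :
    ∃ φ : ℕ → ℕ, Set.InjOn φ ((I0 ∪ J0 : Finset ℕ) : Set ℕ) ∧ φ '' (I0 : Set ℕ) = I ∧
      φ '' (J0 : Set ℕ) = J := by
  have d1 : (I0 \ J0).card = (I \ J).card := by
    have := Finset.card_sdiff_add_card_inter I0 J0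
    have := Finset.card_sdiff_add_card_inter I J
    omega
  have d2 : (J0 \ I0).card = (J \ I).card := by
    have := Finset.card_sdiff_add_card_inter J0 I0
    have := Finset.card_sdiff_add_card_inter J I
    rw [Finset.inter_comm] at h3
    rw [Finset.inter_comm I J] at h3
    omega
  have ex : ∀ A B : Finset ℕ, A.card = B.card → ∃ f : ℕ → ℕ, Set.BijOn f (A : Set ℕ) (B : Set ℕ) := by
    intro A B h
    let e := Finset.equivOfCardEq h
    refine ⟨fun i => if hi : i ∈ A then (e ⟨i, hi⟩ : ℕ) else 0, ?_, ?_, ?_⟩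
    · intro i hi
      have hi' : i ∈ A := hi
      simp [hi']
    · intro i hi j hj hij
      have hi' : i ∈ A := hi
      have hj' : j ∈ A := hj
      simp only [hi', hj', dif_pos] at hij
      simpa using e.injective (Subtype.ext hij)
    · intro b hb
      refine ⟨e.symm ⟨b, hb⟩, (e.symm ⟨b, hb⟩).2, ?_⟩
      simp
  obtain ⟨f1, hf1⟩ := ex _ _ h3
  obtain ⟨f2, hf2⟩ := ex _ _ d1
  obtain ⟨f3, hf3⟩ := ex _ _ d2
  let φ : ℕ → ℕ := fun i => if i ∈ I0 ∩ J0 then f1 i else if i ∈ I0 then f2 i else f3 i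
  have b1 : Set.BijOn φ ((I0 ∩ J0 : Finset ℕ) : Set ℕ) ((I ∩ J : Finset ℕ) : Set ℕ) := by
    refine hf1.congr fun i hi => ?_
    have hi' : i ∈ I0 ∩ J0 := hi
    simp only [φ, hi', if_true]
  have b2 : Set.BijOn φ ((I0 \ J0 : Finset ℕ) : Set ℕ) ((I \ J : Finset ℕ) : Set ℕ) := by
    refine hf2.congr fun i hi => ?_
    have hi' : i ∈ I0 \ J0 := hi
    rw [Finset.mem_sdiff] at hi'
    simp [φ, hi']
  have b3 : Set.BijOn φ ((J0 \ I0 : Finset ℕ) : Set ℕ) ((J \ I : Finset ℕ) : Set ℕ) := by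
    refine hf3.congr fun i hi => ?_
    have hi' : i ∈ J0 \ I0 := hi
    rw [Finset.mem_sdiff] at hi'
    simp [φ, hi']
  refine ⟨φ, ?_, ?_, ?_⟩
  · intro i hi j hj hij
    have hi' : i ∈ I0 ∪ J0 := hi
    have hj' : j ∈ I0 ∪ J0 := hj
    have c1 : ∀ i, i ∈ I0 ∩ J0 → φ i ∈ I ∩ J := fun i hi => b1.1 hi
    have c2 : ∀ i, i ∈ I0 \ J0 → φ i ∈ I \ J := fun i hi => b2.1 hi
    have c3 : ∀ i, i ∈ J0 \ I0 → φ i ∈ J \ I := fun i hi => b3.1 hi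
    have i1 : ∀ i j, i ∈ I0 ∩ J0 → j ∈ I0 ∩ J0 → φ i = φ j → i = j := fun i j hi hj => b1.2.1 hi hj
    have i2 : ∀ i j, i ∈ I0 \ J0 → j ∈ I0 \ J0 → φ i = φ j → i = j := fun i j hi hj => b2.2.1 hi hj
    have i3 : ∀ i j, i ∈ J0 \ I0 → j ∈ J0 \ I0 → φ i = φ j → i = j := fun i j hi hj => b3.2.1 hi hj
    clear_value φ
    clear b1 b2 b3 hf1 hf2 hf3 ex d1 d2 h1 h2 h3 hi hj
    simp only [Finset.mem_inter, Finset.mem_sdiff, Finset.mem_union] at c1 c2 c3 i1 i2 i3 hi' hj'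
    by_cases a1 : i ∈ I0
    · by_cases a2 : i ∈ J0
      · have p := c1 i ⟨a1, a2⟩
        rw [hij] at p
        by_cases a3 : j ∈ I0
        · by_cases a4 : j ∈ J0
          · exact i1 i j ⟨a1, a2⟩ ⟨a3, a4⟩ hij
          · exact absurd p.2 (c2 j ⟨a3, a4⟩).2
        · exact absurd p.1 (c3 j ⟨hj'.resolve_left a3, a3⟩).2
      · have p := c2 i ⟨a1, a2⟩
        rw [hij] at p
        by_cases a4 : j ∈ J0
        · by_cases a3 : j ∈ I0
          · exact absurd (c1 j ⟨a3, a4⟩).2 p.2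
          · exact absurd (c3 j ⟨a4, a3⟩).1 p.2
        · exact i2 i j ⟨a1, a2⟩ ⟨hj'.resolve_right a4, a4⟩ hij
    · have a2 := hi'.resolve_left a1
      have p := c3 i ⟨a2, a1⟩
      rw [hij] at p
      by_cases a3 : j ∈ I0
      · by_cases a4 : j ∈ J0
        · exact absurd (c1 j ⟨a3, a4⟩).1 p.2
        · exact absurd (c2 j ⟨a3, a4⟩).1 p.2
      · exact i3 i j ⟨a2, a1⟩ ⟨hj'.resolve_left a3, a3⟩ hij
  · have : (I0 : Set ℕ) = ((I0 ∩ J0 : Finset ℕ) : Set ℕ) ∪ ((I0 \ J0 : Finset ℕ) : Set ℕ) := by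
      ext; simp
    rw [this, Set.image_union, b1.image_eq, b2.image_eq]
    ext; simp
  · have : (J0 : Set ℕ) = ((I0 ∩ J0 : Finset ℕ) : Set ℕ) ∪ ((J0 \ I0 : Finset ℕ) : Set ℕ) := by
      ext; simp; tauto
    rw [this, Set.image_union, b1.image_eq, b3.image_eq]
    ext; simp; tauto

lemma measurable_YY {Ω : Type*} [MeasurableSpace Ω] (q : ℕ) (K : (Fin q → ℝ) → ℝ)
    (hKmeas : Measurable K) (Z : ℕ → Ω → ℝ) (hZmeas : ∀ i, Measurable (Z i)) (I : Finset ℕ) :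
    Measurable (YY K Z I) :=
  (measurable_Km hKmeas _).comp (measurable_pi_lambda _ fun _ => hZmeas _)

lemma pair_law {Ω : Type*} [MeasurableSpace Ω] (P : Measure Ω) [IsProbabilityMeasure P]
    (γ : ℝ) (q : ℕ) (K : (Fin q → ℝ) → ℝ) (hKmeas : Measurable K)
    (Z : ℕ → Ω → ℝ) (hZmeas : ∀ i, Measurable (Z i))
    (hIndep : iIndepFun Z P)
    (hDist : ∀ i, Measure.map (Z i) P = gpMeasure γ)
    (I J I0 J0 : Finset ℕ) (h1 : I0.card = I.card) (h2 : J0.card = J.card)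
    (h3 : (I0 ∩ J0).card = (I ∩ J).card) :
    IdentDistrib (fun ω => (YY K Z I ω, YY K Z J ω)) (fun ω => (YY K Z I0 ω, YY K Z J0 ω)) P P := by
  have mY := measurable_YY q K hKmeas Z hZmeas
  refine ⟨((mY I).prodMk (mY J)).aemeasurable, ((mY I0).prodMk (mY J0)).aemeasurable, ?_⟩
  obtain ⟨φ, hinj, hI, hJ⟩ := exists_phi I J I0 J0 h1 h2 h3
  let T := I0 ∪ J0
  have hIT : ∀ j, I0.orderEmbOfFin rfl j ∈ T := fun j =>
    Finset.mem_union_left _ (Finset.orderEmbOfFin_mem _ _ _)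
  have hJT : ∀ j, J0.orderEmbOfFin rfl j ∈ T := fun j =>
    Finset.mem_union_right _ (Finset.orderEmbOfFin_mem _ _ _)
  let G : (T → ℝ) → ℝ × ℝ := fun x => (Km K I0.card (fun j => x ⟨I0.orderEmbOfFin rfl j, hIT j⟩),
    Km K J0.card (fun j => x ⟨J0.orderEmbOfFin rfl j, hJT j⟩))
  have hG : Measurable G := ((measurable_Km hKmeas _).comp
      (measurable_pi_lambda _ fun _ => measurable_pi_apply _)).prodMk
    ((measurable_Km hKmeas _).comp (measurable_pi_lambda _ fun _ => measurable_pi_apply _))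
  have e0 : (fun ω => (YY K Z I0 ω, YY K Z J0 ω)) = G ∘ (fun ω (i : T) => Z i ω) := rfl
  have aux : ∀ (A A0 : Finset ℕ), A0 ⊆ T → φ '' (A0 : Set ℕ) = A → ∀ ω,
      YY K Z A ω = Km K A0.card (fun j => Z (φ (A0.orderEmbOfFin rfl j)) ω) := by
    intro A A0 hA hφ ω
    refine (YY_eq K Z A _ ?_ ?_ ω).symm
    · intro a b hab
      exact (A0.orderEmbOfFin rfl).injective (hinj (hA (Finset.orderEmbOfFin_mem _ _ _))
        (hA (Finset.orderEmbOfFin_mem _ _ _)) hab)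
    · rw [← hφ, ← Finset.range_orderEmbOfFin A0 rfl, ← Set.range_comp]
      rfl
  have e1 : (fun ω => (YY K Z I ω, YY K Z J ω)) = G ∘ (fun ω (i : T) => Z (φ i) ω) := by
    ext ω
    · exact aux I I0 Finset.subset_union_left hI ω
    · exact aux J J0 Finset.subset_union_right hJ ω
  rw [e0, e1, ← Measure.map_map hG (measurable_pi_lambda _ fun _ => hZmeas _),
    ← Measure.map_map hG (measurable_pi_lambda _ fun _ => hZmeas _),
    law P γ Z hZmeas hIndep hDist (fun i : T => φ i) (fun a b hab => Subtype.ext (hinj a.2 b.2 hab)),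
    law P γ Z hZmeas hIndep hDist (fun i : T => (i : ℕ)) Subtype.val_injective]

lemma cov_congr {Ω : Type*} [MeasurableSpace Ω] (P : Measure Ω) (X Y X' Y' : Ω → ℝ)
    (h : IdentDistrib (fun ω => (X ω, Y ω)) (fun ω => (X' ω, Y' ω)) P P) :
    cov[X, Y; P] = cov[X', Y'; P] := by
  have hX : ∫ ω, X ω ∂P = ∫ ω, X' ω ∂P := (h.comp measurable_fst).integral_eq
  have hY : ∫ ω, Y ω ∂P = ∫ ω, Y' ω ∂P := (h.comp measurable_snd).integral_eq
  unfold covariance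
  rw [hX, hY]
  have := (h.comp (u := fun p : ℝ × ℝ => (p.1 - ∫ ω, X' ω ∂P) * (p.2 - ∫ ω, Y' ω ∂P))
    (by fun_prop)).integral_eq
  exact this


lemma m_div_n (m : ℕ → ℕ) (hDeg : DegreeCond m) :
    Tendsto (fun n : ℕ => (m n : ℝ) / n) atTop (𝓝 0) := by
  obtain ⟨ε, hε, δ, hδ, h1, h2⟩ := hDeg
  have h3 : Tendsto (fun n : ℕ => (n:ℝ) ^ (-ε)) atTop (𝓝 0) :=
    (tendsto_rpow_neg_atTop hε).comp tendsto_natCast_atTop_atTop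
  have := h1.mul h3
  rw [mul_zero] at this
  refine this.congr' ?_
  filter_upwards [eventually_gt_atTop 0] with n hn
  have hn : (0:ℝ) < n := by exact_mod_cast hn
  rw [Real.rpow_sub hn, Real.rpow_one, Real.rpow_neg hn.le]
  have : (0:ℝ) < (n:ℝ) ^ ε := by positivity
  field_simp

lemma m_large (m : ℕ → ℕ) (hDeg : DegreeCond m) (q : ℕ) :
    ∀ᶠ n in atTop, m n = 0 ∨ q ≤ m n := by
  obtain ⟨ε, hε, δ, hδ, h1, h2⟩ := hDeg
  have hl : Tendsto (fun n : ℕ => Real.log n) atTop atTop :=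
    Real.tendsto_log_atTop.comp tendsto_natCast_atTop_atTop
  filter_upwards [h2.eventually_lt_const one_pos,
    hl.eventually_gt_atTop ((q:ℝ) ^ |1 - δ|)] with n h3 h4
  by_contra hcon
  push Not at hcon
  have hm1 : (1:ℝ) ≤ m n := by exact_mod_cast Nat.one_le_iff_ne_zero.2 hcon.1
  have hmq : (m n : ℝ) ≤ q := by exact_mod_cast hcon.2.le
  have h5 : (m n : ℝ) ^ (1 - δ) ≤ (q:ℝ) ^ |1 - δ| :=
    (Real.rpow_le_rpow_of_exponent_le hm1 (le_abs_self _)).trans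
      (Real.rpow_le_rpow (by linarith) hmq (abs_nonneg _))
  rw [div_lt_one (by positivity)] at h3
  linarith

lemma YY_bound {Ω : Type*} [MeasurableSpace Ω] (P : Measure Ω) [IsProbabilityMeasure P]
    (γ : ℝ) (q : ℕ) (hq : 3 ≤ q) (K : (Fin q → ℝ) → ℝ) (hKmeas : Measurable K)
    (hLS : LocScaleInvariant K) (hMom : MomentCond γ K)
    (Z : ℕ → Ω → ℝ) (hZmeas : ∀ i, Measurable (Z i))
    (hIndep : iIndepFun Z P)
    (hDist : ∀ i, Measure.map (Z i) P = gpMeasure γ) (I : Finset ℕ) (hI : q ≤ I.card) :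
    MemLp (YY K Z I) 2 P ∧ cov[YY K Z I, YY K Z I; P] ≤
      (∫⁻ z, ENNReal.ofReal (|K (refVec z)| ^ (2:ℝ)) ∂(gpPi γ (q-1))).toReal := by
  have mY := measurable_YY q K hKmeas Z hZmeas I
  set V := ∫⁻ z, ENNReal.ofReal (|K (refVec z)| ^ (2:ℝ)) ∂(gpPi γ (q-1)) with hV
  have hVt : V < ⊤ := hMom 2 two_pos
  have hb : ∫⁻ ω, ENNReal.ofReal (YY K Z I ω ^ 2) ∂P ≤ V := by
    have hF : Measurable (fun x : Fin q → ℝ => ENNReal.ofReal (|K x| ^ (2:ℝ))) :=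
      ((measurable_norm.comp hKmeas).pow_const _).ennreal_ofReal
    have h1 := gp_bound γ q (by omega) (fun x => ENNReal.ofReal (|K x| ^ (2:ℝ))) hF
      (fun a b ha x => by rw [hLS a b ha x]) I.card (by omega)
    refine le_trans (le_of_eq ?_) h1
    rw [gpPi, ← law P γ Z hZmeas hIndep hDist (fun j => I.orderEmbOfFin rfl j)
      (I.orderEmbOfFin rfl).injective, lintegral_map _ (measurable_pi_lambda _ fun _ => hZmeas _)]
    · refine lintegral_congr fun ω => ?_
      rw [Real.rpow_two, sq_abs]
      rfl
    · exact hF.comp (measurable_pi_lambda _ fun j => measurable_descStat _ j)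
  have hint : Integrable (fun ω => YY K Z I ω ^ 2) P := by
    refine ⟨(mY.pow_const 2).aestronglyMeasurable, ?_⟩
    rw [hasFiniteIntegral_iff_ofReal (Eventually.of_forall fun ω => sq_nonneg _)]
    exact hb.trans_lt hVt
  have hL := (memLp_two_iff_integrable_sq mY.aestronglyMeasurable).2 hint
  refine ⟨hL, ?_⟩
  rw [covariance_self mY.aemeasurable]
  refine (variance_le_expectation_sq mY.aestronglyMeasurable).trans ?_
  change ∫ ω, YY K Z I ω ^ 2 ∂P ≤ _
  rw [integral_eq_lintegral_of_nonneg_ae (Eventually.of_forall fun ω => sq_nonneg _)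
    (mY.pow_const 2).aestronglyMeasurable]
  exact ENNReal.toReal_mono hVt.ne hb

lemma range_zero_add (m : ℕ) : Set.range (fun i : Fin m => (i : ℕ)) = (Finset.range m : Finset ℕ) := by
  ext x
  simp only [Set.mem_range, Finset.coe_range, Set.mem_Iio]
  exact ⟨fun ⟨i, hi⟩ => hi ▸ i.2, fun h => ⟨⟨x, h⟩, rfl⟩⟩

lemma range_shift (a m : ℕ) : Set.range (fun i : Fin m => a + (i : ℕ)) = (Finset.Ico a (a + m) : Finset ℕ) := by
  ext x
  simp only [Set.mem_range, Finset.coe_Ico, Set.mem_Ico]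
  constructor
  · rintro ⟨i, rfl⟩
    have := i.2
    omega
  · rintro ⟨h1, h2⟩
    exact ⟨⟨x - a, by omega⟩, by simp; omega⟩

lemma main_bound {Ω : Type*} [MeasurableSpace Ω] (P : Measure Ω) [IsProbabilityMeasure P]
    (γ : ℝ) (q : ℕ) (hq : 3 ≤ q) (K : (Fin q → ℝ) → ℝ) (hKmeas : Measurable K)
    (hLS : LocScaleInvariant K) (hMom : MomentCond γ K)
    (Z : ℕ → Ω → ℝ) (hZmeas : ∀ i, Measurable (Z i))
    (hIndep : iIndepFun Z P)
    (hDist : ∀ i, Measure.map (Z i) P = gpMeasure γ) (m n : ℕ) (hm : q ≤ m) (hmn : m ≤ n) :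
    |variance (fun ω => UStat K m n (fun i : Fin n => Z i ω)) P - (m:ℝ)^2 / n * zetaCov P K Z m 1| ≤
      ((m:ℝ)/n)^2 * (∫⁻ z, ENNReal.ofReal (|K (refVec z)| ^ (2:ℝ)) ∂(gpPi γ (q-1))).toReal := by
  have hB := fun I hI => YY_bound P γ q hq K hKmeas hLS hMom Z hZmeas hIndep hDist I hI
  have mY := measurable_YY q K hKmeas Z hZmeas
  set ζ : ℕ → ℝ := fun ℓ => zetaCov P K Z m ℓ with hζ
  have canon : ∀ ℓ ≤ m, cov[YY K Z (Finset.range m), YY K Z (Finset.Ico (m - ℓ) (m - ℓ + m)); P] = ζ ℓ := by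
    intro ℓ hℓ
    rw [covariance_eq_sub (hB _ (by simpa using hm)).1 (hB _ (by simpa using hm)).1]
    simp only [hζ, zetaCov, Pi.mul_apply]
    have e1 : ∀ ω, Km K m (fun i : Fin m => Z i ω) = YY K Z (Finset.range m) ω := fun ω =>
      YY_eq K Z _ (fun i : Fin m => (i : ℕ)) Fin.val_injective (range_zero_add m) ω
    have e2 : ∀ ω, Km K m (fun i : Fin m => Z (m - ℓ + i) ω) =
        YY K Z (Finset.Ico (m - ℓ) (m - ℓ + m)) ω := fun ω =>
      YY_eq K Z _ (fun i : Fin m => m - ℓ + (i : ℕ)) (fun a b h => Fin.ext (by simpa using h))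
        (range_shift _ m) ω
    simp only [e1, e2]
  have hcov : ∀ I J : Finset ℕ, I.card = m → J.card = m →
      cov[YY K Z I, YY K Z J; P] = ζ (I ∩ J).card := by
    intro I J hI hJ
    have hle : (I ∩ J).card ≤ m := hI ▸ Finset.card_le_card Finset.inter_subset_left
    rw [← canon _ hle]
    refine cov_congr P _ _ _ _ (pair_law P γ q K hKmeas Z hZmeas hIndep hDist _ _ _ _ ?_ ?_ ?_)
    · simp [hI]
    · simp [hJ]
    · have : Finset.range m ∩ Finset.Ico (m - (I ∩ J).card) (m - (I ∩ J).card + m) =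
          Finset.Ico (m - (I ∩ J).card) m := by
        ext x; simp only [Finset.mem_inter, Finset.mem_range, Finset.mem_Ico]; omega
      rw [this, Nat.card_Ico]; omega
  have hPSD : PSD m ζ := by
    intro s I c hs
    have hL : ∀ i ∈ s, MemLp (fun ω => c i * YY K Z (I i) ω) 2 P := fun i hi =>
      (hB _ (by rw [hs i hi]; exact hm)).1.const_mul (c i)
    have := variance_nonneg (∑ i ∈ s, fun ω => c i * YY K Z (I i) ω) P
    rw [variance_sum' hL] at this
    refine this.trans_eq (Finset.sum_congr rfl fun i hi => Finset.sum_congr rfl fun j hj => ?_)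
    rw [covariance_const_mul_left, covariance_const_mul_right, hcov _ _ (hs i hi) (hs j hj)]
    ring
  have h0 : ζ 0 = 0 := by
    rw [← canon 0 (Nat.zero_le _)]
    refine IndepFun.covariance_eq_zero ?_ (hB _ (by simpa using hm)).1 (hB _ (by simpa using hm)).1
    have hd : Disjoint (Finset.range m) (Finset.Ico (m - 0) (m - 0 + m)) := by
      rw [Finset.disjoint_left]; intro x; simp only [Finset.mem_range, Finset.mem_Ico]; omega
    have hi := hIndep.indepFun_finset _ _ hd hZmeas
    have key : ∀ A : Finset ℕ, ∃ g : (A → ℝ) → ℝ, Measurable g ∧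
        YY K Z A = g ∘ (fun ω (i : A) => Z i ω) := by
      intro A
      exact ⟨fun x => Km K A.card (fun j => x ⟨A.orderEmbOfFin rfl j, Finset.orderEmbOfFin_mem _ _ _⟩),
        (measurable_Km hKmeas _).comp (measurable_pi_lambda _ fun _ => measurable_pi_apply _), rfl⟩
    obtain ⟨g1, hg1, e1⟩ := key (Finset.range m)
    obtain ⟨g2, hg2, e2⟩ := key (Finset.Ico (m - 0) (m - 0 + m))
    rw [e1, e2]
    exact hi.comp hg1 hg2
  have hU : (fun ω => UStat K m n (fun i : Fin n => Z i ω)) = fun ω => ((n.choose m : ℝ))⁻¹ *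
      (∑ I ∈ Finset.powersetCard m (Finset.univ : Finset (Fin n)),
        YY K Z (I.map Fin.valEmbedding)) ω := by
    ext ω
    unfold UStat
    rw [Finset.sum_apply]
    congr 1
    refine Finset.sum_congr rfl fun I _ => ?_
    refine YY_eq K Z _ (fun j => ((I.orderIsoOfFin rfl j).1 : ℕ)) ?_ ?_ ω
    · intro a b h
      exact (I.orderIsoOfFin rfl).injective (Subtype.ext (Fin.ext h))
    · ext x
      simp only [Set.mem_range, Finset.coe_map, Set.mem_image, Finset.mem_coe, Fin.valEmbedding_apply]
      constructor
      · rintro ⟨j, rfl⟩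
        exact ⟨_, (I.orderIsoOfFin rfl j).2, rfl⟩
      · rintro ⟨i, hi, rfl⟩
        exact ⟨(I.orderIsoOfFin rfl).symm ⟨i, hi⟩, by simp⟩
  have hcard : ∀ I ∈ Finset.powersetCard m (Finset.univ : Finset (Fin n)),
      (I.map Fin.valEmbedding).card = m := fun I hI => by
    rw [Finset.card_map, (Finset.mem_powersetCard.1 hI).2]
  have hvar : variance (fun ω => UStat K m n (fun i : Fin n => Z i ω)) P =
      ((n.choose m : ℝ))⁻¹ ^ 2 * ∑ I ∈ Finset.powersetCard m (Finset.univ : Finset (Fin n)),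
      ∑ J ∈ Finset.powersetCard m (Finset.univ : Finset (Fin n)), ζ (I ∩ J).card := by
    rw [hU, variance_const_mul, variance_sum' fun I hI => (hB _ (by rw [hcard I hI]; exact hm)).1]
    congr 1
    refine Finset.sum_congr rfl fun I hI => Finset.sum_congr rfl fun J hJ => ?_
    rw [hcov _ _ (hcard I hI) (hcard J hJ), ← Finset.map_inter, Finset.card_map]
  rw [hvar]
  refine (var_bound m n (by omega) hmn ζ hPSD h0).trans ?_
  refine mul_le_mul_of_nonneg_left ?_ (by positivity)
  have h5 := hcov (Finset.range m) (Finset.range m) (by simp) (by simp)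
  rw [Finset.inter_self, Finset.card_range] at h5
  rw [← h5]
  exact (hB _ (by simpa using hm)).2

/-- Proposition: variance approximation.
Under the kernel and degree conditions, `|var(U^m_{n,Z}) - (m/k) ζ_{m,1}| = o(1/k)`,
i.e. `k · |var(U^m_{n,Z}) - (m/k) ζ_{m,1}| → 0`, where `k = n/m`. -/
theorem extreme_U_statistic_variance_approx
    {Ω : Type*} [MeasurableSpace Ω] (P : Measure Ω) [IsProbabilityMeasure P]
    (γ : ℝ) (q : ℕ) (hq : 3 ≤ q)
    (K : (Fin q → ℝ) → ℝ) (hKmeas : Measurable K)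
    (hLS : LocScaleInvariant K)
    (hNonconst : ∃ x y : Fin q → ℝ, K x ≠ K y)
    (hMom : MomentCond γ K)
    (m : ℕ → ℕ) (hDeg : DegreeCond m)
    (Z : ℕ → Ω → ℝ) (hZmeas : ∀ i, Measurable (Z i))
    (hIndep : iIndepFun Z P)
    (hDist : ∀ i, Measure.map (Z i) P = gpMeasure γ) :
    Tendsto
      (fun n : ℕ => ((n : ℝ) / (m n : ℝ)) *
        |variance (fun ω => UStat K (m n) n (fun i : Fin n => Z i ω)) P -
          ((m n : ℝ) / ((n : ℝ) / (m n : ℝ))) * zetaCov P K Z (m n) 1|)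
      atTop (𝓝 0) := by
  set V := (∫⁻ z, ENNReal.ofReal (|K (refVec z)| ^ (2:ℝ)) ∂(gpPi γ (q-1))).toReal with hV
  have hlim := m_div_n m hDeg
  have hlimV : Tendsto (fun n : ℕ => (m n : ℝ) / n * V) atTop (𝓝 0) := by
    simpa using hlim.mul_const V
  refine squeeze_zero' (Eventually.of_forall fun n => by positivity) ?_ hlimV
  filter_upwards [m_large m hDeg q, hlim.eventually_lt_const one_pos, eventually_gt_atTop 0]
    with n h1 h2 h3
  have hn : (0:ℝ) < n := by exact_mod_cast h3
  rcases h1 with h1 | h1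
  · simp [h1]
  · have hm0 : (0:ℝ) < m n := by exact_mod_cast (by omega : 0 < m n)
    have hmn : m n ≤ n := by
      rw [div_lt_one hn] at h2
      exact_mod_cast h2.le
    have hb := main_bound P γ q hq K hKmeas hLS hMom Z hZmeas hIndep hDist (m n) n h1 hmn
    rw [show (m n : ℝ) / ((n : ℝ) / (m n : ℝ)) = (m n : ℝ)^2 / n by field_simp]
    refine (mul_le_mul_of_nonneg_left hb (by positivity)).trans_eq ?_
    rw [← hV]
    field_simp

end
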